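/- arXiv:1906.09981 — 2 statements merged into one kernel-verified Lean document; each statement's English description precedes it below -/
import Mathlib

section
/- Theorem 1 (null duality gap). Under the primal–dual setup, assume (i) Slater's condition: there exists a power allocation policy p₀ with ∫ ∑_{i=1}^m p₀_i(x) dμ(x) < P_T (strict inequality), and (ii) the channel-state distribution μ has no atoms (no single point has positive μ-measure). Then the duality gap is null: 𝕡 = 𝕕, i.e. sup over feasible policies of the expected weighted capacity equals inf_{λ≥0} sup over all policies of the Lagrangian. -/
open MeasureTheory Real Filter

noncomputable section

/-- Per-wavelength RoFSO capacity `C(P,h) = log(1 + CNR)` with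
`CNR = α (Ph)² / (β (Ph)² + γ (Ph) + δ)`. -/
def cnrCap (α β γ δ : ℝ) (P h : ℝ) : ℝ :=
  Real.log (1 + α * (P * h) ^ 2 / (β * (P * h) ^ 2 + γ * (P * h) + δ))

/-- A power allocation policy: a measurable map into the box `[0, PS]^m`. -/
def IsPolicy {m : ℕ} (PS : ℝ) (p : (Fin m → ℝ) → Fin m → ℝ) : Prop :=
  Measurable p ∧ ∀ x i, p x i ∈ Set.Icc (0 : ℝ) PS

/-- Expected weighted sum-capacity objective `F(p)`. -/
def objF {m : ℕ} (α β γ δ : ℝ) (ω : Fin m → ℝ) (μ : Measure (Fin m → ℝ))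
    (p : (Fin m → ℝ) → Fin m → ℝ) : ℝ :=
  ∫ x, ∑ i, ω i * cnrCap α β γ δ (p x i) (x i) ∂μ

/-- Expected total power of a policy. -/
def totPow {m : ℕ} (μ : Measure (Fin m → ℝ)) (p : (Fin m → ℝ) → Fin m → ℝ) : ℝ :=
  ∫ x, ∑ i, p x i ∂μ

/-- Lagrangian `L(p, λ) = F(p) + λ (P_T − E[∑ pᵢ])`. -/
def Lagr {m : ℕ} (α β γ δ : ℝ) (ω : Fin m → ℝ) (μ : Measure (Fin m → ℝ)) (PT : ℝ)
    (p : (Fin m → ℝ) → Fin m → ℝ) (lam : ℝ) : ℝ :=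
  objF α β γ δ ω μ p + lam * (PT - totPow μ p)

/-- Dual function `D(λ) = sup_p L(p, λ)` over all policies. -/
def dualFun {m : ℕ} (α β γ δ : ℝ) (ω : Fin m → ℝ) (μ : Measure (Fin m → ℝ)) (PT PS : ℝ)
    (lam : ℝ) : ℝ :=
  sSup {y | ∃ p, IsPolicy PS p ∧ y = Lagr α β γ δ ω μ PT p lam}

/-- Primal value `𝕡 = sup { F(p) : p feasible }`. -/
def primalVal {m : ℕ} (α β γ δ : ℝ) (ω : Fin m → ℝ) (μ : Measure (Fin m → ℝ))
    (PT PS : ℝ) : ℝ :=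
  sSup {y | ∃ p, IsPolicy PS p ∧ totPow μ p ≤ PT ∧ y = objF α β γ δ ω μ p}

/-- Dual value `𝕕 = inf_{λ ≥ 0} D(λ)`. -/
def dualVal {m : ℕ} (α β γ δ : ℝ) (ω : Fin m → ℝ) (μ : Measure (Fin m → ℝ))
    (PT PS : ℝ) : ℝ :=
  sInf {y | ∃ lam ≥ (0 : ℝ), y = dualFun α β γ δ ω μ PT PS lam}

end

/-- Every measurable set contains, under a finite measure vanishing on points, a measurable subset
carrying a prescribed proportion of its mass. -/
theorem exists_measurableSet_subset_measureReal_eq {Ω : Type*} [MeasurableSpace Ω]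
    [StandardBorelSpace Ω] (μ : Measure Ω) [IsFiniteMeasure μ] [NullSingletonClass μ]
    {A : Set Ω} (hA : MeasurableSet A) {θ : ℝ} (hθ : θ ∈ Set.Ioo (0 : ℝ) 1) :
    ∃ E ⊆ A, MeasurableSet E ∧ μ.real E = θ * μ.real A := by
  obtain ⟨f, hf⟩ := exists_measurableEmbedding_real Ω
  set ν : Measure ℝ := (μ.restrict A).map f with hν
  have hνapply : ∀ s, MeasurableSet s → ν.real s = μ.real (A ∩ f ⁻¹' s) := by
    intro s hs
    rw [measureReal_def, measureReal_def, hν, Measure.map_apply hf.measurable hs,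
      Measure.restrict_apply (hf.measurable hs), Set.inter_comm]
  have : NullSingletonClass ν := ⟨fun t => by
    rw [hν, Measure.map_apply hf.measurable (measurableSet_singleton t)]
    exact (Set.subsingleton_singleton.preimage hf.injective).measure_zero _⟩
  rcases (measureReal_nonneg (μ := μ) (s := A)).eq_or_lt with h0 | hpos
  · exact ⟨∅, Set.empty_subset _, MeasurableSet.empty, by simp [← h0]⟩
  have huniv : ν.real Set.univ = μ.real A := by simp [hνapply _ MeasurableSet.univ]
  have hcont : Continuous fun t => ν.real (Set.Iic t) := by
    have h := (intervalIntegral.continuous_primitive (μ := ν) (f := fun _ => (1 : ℝ))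
      (fun a b => intervalIntegrable_const) 0).add_const (ν.real (Set.Iic 0))
    refine h.congr fun t => ?_
    rw [← intervalIntegral.integral_Iic_sub_Iic (integrable_const _) (integrable_const _)]
    simp [measureReal_def]
  have htop : Tendsto (fun t => ν.real (Set.Iic t)) atTop (nhds (ν.real Set.univ)) :=
    (ENNReal.tendsto_toReal (measure_ne_top _ _)).comp (tendsto_measure_Iic_atTop ν)
  have hbot : Tendsto (fun t => ν.real (Set.Iic t)) atBot (nhds 0) := by
    have h := tendsto_measure_iInter_atBot (μ := ν) (s := fun t : ℝ => Set.Iic t)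
      (fun t => measurableSet_Iic.nullMeasurableSet) (fun a b h => Set.Iic_subset_Iic.2 h)
      ⟨0, measure_ne_top _ _⟩
    have he : (⋂ t : ℝ, Set.Iic t) = ∅ := by
      ext y
      simpa using exists_lt y
    rw [he, measure_empty] at h
    exact (ENNReal.tendsto_toReal ENNReal.zero_ne_top).comp h
  obtain ⟨t, ht⟩ : θ * μ.real A ∈ Set.range fun t => ν.real (Set.Iic t) := by
    refine mem_range_of_exists_le_of_exists_ge hcont ?_ ?_
    · exact (hbot.eventually_le_const (mul_pos hθ.1 hpos)).exists
    · refine (htop.eventually_const_le ?_).exists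
      rw [huniv]
      nlinarith [hθ.2]
  refine ⟨A ∩ f ⁻¹' Set.Iic t, Set.inter_subset_left, hA.inter (hf.measurable measurableSet_Iic), ?_⟩
  rw [← hνapply _ measurableSet_Iic]
  exact ht

/-- A measurable set that meets each fibre of a countably valued map in the proportion `θ`. -/
theorem exists_measurableSet_setIntegral_comp_eq {Ω ι : Type*} [MeasurableSpace Ω]
    [StandardBorelSpace Ω] [MeasurableSpace ι] [MeasurableSingletonClass ι] [Countable ι]
    (μ : Measure Ω) [IsFiniteMeasure μ] [NullSingletonClass μ]
    {q : Ω → ι} (hq : Measurable q) {θ : ℝ} (hθ : θ ∈ Set.Ioo (0 : ℝ) 1) :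
    ∃ E, MeasurableSet E ∧ ∀ φ : ι → ℝ, ∫ x in E, φ (q x) ∂μ = θ * ∫ x, φ (q x) ∂μ := by
  choose E hEsub hEmeas hEeq using fun k : ι =>
    exists_measurableSet_subset_measureReal_eq μ (hq (measurableSet_singleton k)) hθ
  refine ⟨⋃ k, E k, MeasurableSet.iUnion hEmeas, fun φ => ?_⟩
  have hfib : ∀ k, q ⁻¹' {k} ∩ ⋃ j, E j = E k := by
    intro k
    ext x
    simp only [Set.mem_inter_iff, Set.mem_preimage, Set.mem_singleton_iff, Set.mem_iUnion]
    constructor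
    · rintro ⟨hk, j, hj⟩
      have : q x = j := hEsub j hj
      rwa [← hk, this]
    · exact fun h => ⟨hEsub k h, k, h⟩
  have hmap : (μ.restrict (⋃ k, E k)).map q = ENNReal.ofReal θ • μ.map q := by
    refine Measure.ext_of_singleton fun k => ?_
    have hk := measurableSet_singleton k
    rw [Measure.map_apply hq hk, Measure.restrict_apply (hq hk), hfib, Measure.smul_apply,
      Measure.map_apply hq hk, smul_eq_mul, ← ofReal_measureReal (μ := μ) (s := E k), hEeq,
      ENNReal.ofReal_mul hθ.1.le, ofReal_measureReal]
  have hφ : Measurable φ := measurable_of_countable φ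
  rw [← integral_map hq.aemeasurable hφ.aestronglyMeasurable, hmap, integral_smul_measure,
    integral_map hq.aemeasurable hφ.aestronglyMeasurable, ENNReal.toReal_ofReal hθ.1.le, smul_eq_mul]

theorem abs_setIntegral_sub_mul_integral_le {Ω : Type*} [MeasurableSpace Ω] {μ : Measure Ω}
    [IsProbabilityMeasure μ] {f g : Ω → ℝ} {E : Set Ω} {θ ε : ℝ}
    (hθ : θ ∈ Set.Ioo (0 : ℝ) 1) (hg : Integrable g μ) (hf : Measurable f)
    (hfg : ∀ x, |g x - f x| ≤ ε) (hE : ∫ x in E, f x ∂μ = θ * ∫ x, f x ∂μ) :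
    |∫ x in E, g x ∂μ - θ * ∫ x, g x ∂μ| ≤ 2 * ε := by
  have hd : Integrable (fun x => g x - f x) μ :=
    Integrable.of_bound (hg.aestronglyMeasurable.sub hf.aestronglyMeasurable) ε
      (Eventually.of_forall hfg)
  have hfi : Integrable f μ := (hg.sub hd).congr (Eventually.of_forall fun x => by simp)
  have hε : 0 ≤ ε := by
    obtain ⟨x⟩ := nonempty_of_isProbabilityMeasure μ
    exact (abs_nonneg _).trans (hfg x)
  have h1 : |∫ x, (g x - f x) ∂μ| ≤ ε := by
    simpa using norm_integral_le_of_norm_le_const (μ := μ)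
      (f := fun x => g x - f x) (Eventually.of_forall hfg)
  have h2 : |∫ x in E, (g x - f x) ∂μ| ≤ ε := by
    have h := norm_integral_le_of_norm_le_const (μ := μ.restrict E)
      (f := fun x => g x - f x) (Eventually.of_forall hfg)
    refine h.trans (mul_le_of_le_one_right hε ?_)
    simp [measureReal_le_one]
  rw [integral_sub hg hfi] at h1
  rw [integral_sub hg.integrableOn hfi.integrableOn, hE] at h2
  rw [abs_le] at h1 h2 ⊢
  constructor <;> nlinarith [hθ.1, hθ.2]

theorem abs_sub_mul_floor_div_le {ε : ℝ} (hε : 0 < ε) (y : ℝ) : |y - ε * ⌊y / ε⌋| ≤ ε := by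
  have h1 := Int.floor_le (y / ε)
  have h2 := (Int.lt_floor_add_one (y / ε)).le
  rw [le_div_iff₀ hε] at h1
  rw [div_le_iff₀ hε] at h2
  rw [abs_le]
  constructor <;> linarith

/-- Approximate form of Lyapunov's convexity theorem for a pair of integrable densities. -/
theorem exists_measurableSet_abs_setIntegral_sub_le {Ω : Type*} [MeasurableSpace Ω]
    [StandardBorelSpace Ω] (μ : Measure Ω) [IsProbabilityMeasure μ] [NullSingletonClass μ]
    {g h : Ω → ℝ} (hgm : Measurable g) (hhm : Measurable h)
    (hg : Integrable g μ) (hh : Integrable h μ)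
    {θ ε : ℝ} (hθ : θ ∈ Set.Ioo (0 : ℝ) 1) (hε : 0 < ε) :
    ∃ E, MeasurableSet E ∧ |∫ x in E, g x ∂μ - θ * ∫ x, g x ∂μ| ≤ ε ∧
      |∫ x in E, h x ∂μ - θ * ∫ x, h x ∂μ| ≤ ε := by
  have hqg : Measurable fun x => ⌊g x / (ε / 2)⌋ := (hgm.div_const _).floor
  have hqh : Measurable fun x => ⌊h x / (ε / 2)⌋ := (hhm.div_const _).floor
  obtain ⟨E, hE, hEq⟩ := exists_measurableSet_setIntegral_comp_eq μ (hqg.prodMk hqh) hθ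
  have hcast : Measurable fun n : ℤ => ε / 2 * (n : ℝ) := measurable_of_countable _
  have key : ε = 2 * (ε / 2) := by ring
  refine ⟨E, hE, ?_, ?_⟩ <;> rw [key]
  · exact abs_setIntegral_sub_mul_integral_le hθ hg (hcast.comp hqg)
      (fun x => abs_sub_mul_floor_div_le (half_pos hε) _) (hEq fun n => ε / 2 * (n.1 : ℝ))
  · exact abs_setIntegral_sub_mul_integral_le hθ hh (hcast.comp hqh)
      (fun x => abs_sub_mul_floor_div_le (half_pos hε) _) (hEq fun n => ε / 2 * (n.2 : ℝ))

/-- Existence of a Lagrange multiplier when the achievable pairs `(F p, T p)` form a set with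
convex closure and the constraint `T p ≤ c` satisfies Slater's condition. -/
theorem exists_multiplier_of_approx_convex {P : Type*} {F T : P → ℝ} {c V : ℝ}
    (hV : ∀ p, T p ≤ c → F p ≤ V) (hslater : ∃ p, T p < c)
    (hmix : ∀ p q, ∀ θ ∈ Set.Ioo (0 : ℝ) 1, ∀ ε > 0, ∃ r,
      |F r - (θ * F p + (1 - θ) * F q)| ≤ ε ∧ |T r - (θ * T p + (1 - θ) * T q)| ≤ ε) :
    ∃ lam ≥ (0 : ℝ), ∀ p, F p + lam * (c - T p) ≤ V := by
  have hcross : ∀ p q, c < T p → T q < c →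
      (F p - V) / (T p - c) ≤ (V - F q) / (c - T q) := by
    intro p q hp hq
    have hp' : 0 < T p - c := sub_pos.2 hp
    have hq' : 0 < c - T q := sub_pos.2 hq
    have hD : 0 < T p - T q := by linarith
    rw [div_le_div_iff₀ hp' hq']
    have hbound : ∀ ε ∈ Set.Ioo 0 (c - T q),
        (c - T q - ε) * F p + (T p - c + ε) * F q ≤ (V + ε) * (T p - T q) := by
      intro ε hε
      obtain ⟨r, hFr, hTr⟩ := hmix p q ((c - T q - ε) / (T p - T q))
        ⟨div_pos (by linarith [hε.2]) hD, (div_lt_one hD).2 (by linarith [hε.1])⟩ ε hε.1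
      have hθ : (c - T q - ε) / (T p - T q) * (T p - T q) = c - T q - ε :=
        div_mul_cancel₀ _ hD.ne'
      set θ := (c - T q - ε) / (T p - T q)
      rw [abs_le] at hFr hTr
      have hFV := hV r (by nlinarith [hTr.2])
      have hle : θ * F p + (1 - θ) * F q ≤ V + ε := by linarith [hFr.1]
      have hmul := mul_le_mul_of_nonneg_right hle hD.le
      have hexpand : (θ * F p + (1 - θ) * F q) * (T p - T q) =
          (c - T q - ε) * F p + (T p - c + ε) * F q := by
        linear_combination (F p - F q) * hθ
      linarith
    have hlim : (c - T q - 0) * F p + (T p - c + 0) * F q ≤ (V + 0) * (T p - T q) := by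
      have hev : ∀ᶠ ε in nhdsWithin (0 : ℝ) (Set.Ioi 0),
          (c - T q - ε) * F p + (T p - c + ε) * F q ≤ (V + ε) * (T p - T q) :=
        mem_of_superset (Ioo_mem_nhdsGT hq') hbound
      refine le_of_tendsto_of_tendsto (b := nhdsWithin (0 : ℝ) (Set.Ioi 0))
        (f := fun ε => (c - T q - ε) * F p + (T p - c + ε) * F q)
        (g := fun ε => (V + ε) * (T p - T q)) ?_ ?_ hev
      · exact (Continuous.tendsto (by fun_prop) 0).mono_left nhdsWithin_le_nhds
      · exact (Continuous.tendsto (by fun_prop) 0).mono_left nhdsWithin_le_nhds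
    linarith
  set S : Set ℝ := {y | ∃ q, T q < c ∧ y = (V - F q) / (c - T q)} with hS
  have hSne : S.Nonempty := hslater.imp' (fun q => (V - F q) / (c - T q)) fun q hq => ⟨q, hq, rfl⟩
  have hSpos : ∀ y ∈ S, 0 ≤ y := by
    rintro y ⟨q, hq, rfl⟩
    exact div_nonneg (sub_nonneg.2 (hV q hq.le)) (sub_nonneg.2 hq.le)
  refine ⟨sInf S, le_csInf hSne hSpos, fun p => ?_⟩
  rcases lt_trichotomy (T p) c with hp | hp | hp
  · have h := csInf_le ⟨0, hSpos⟩ (⟨p, hp, rfl⟩ : (V - F p) / (c - T p) ∈ S)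
    rw [le_div_iff₀ (sub_pos.2 hp)] at h
    linarith
  · simpa [hp] using hV p hp.le
  · have h : (F p - V) / (T p - c) ≤ sInf S := by
      refine le_csInf hSne ?_
      rintro y ⟨q, hq, rfl⟩
      exact hcross p q hp hq
    rw [div_le_iff₀ (sub_pos.2 hp)] at h
    linarith

theorem cnrCap_mem_Icc {α β γ δ P h : ℝ} (hα : 0 < α) (hβ : 0 < β) (hγ : 0 < γ) (hδ : 0 < δ)
    (hP : 0 ≤ P) (hh : 0 ≤ h) :
    cnrCap α β γ δ P h ∈ Set.Icc 0 (Real.log (1 + α / β)) := by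
  have ht : 0 ≤ P * h := mul_nonneg hP hh
  have hden : 0 < β * (P * h) ^ 2 + γ * (P * h) + δ := by positivity
  have hcnr : 0 ≤ α * (P * h) ^ 2 / (β * (P * h) ^ 2 + γ * (P * h) + δ) := by positivity
  refine ⟨Real.log_nonneg (by linarith), Real.log_le_log (by linarith) ?_⟩
  gcongr 1 + ?_
  rw [div_le_div_iff₀ hden hβ]
  nlinarith [mul_nonneg hα.le (mul_nonneg hγ.le ht), mul_pos hα hδ]

section Policy

variable {m : ℕ} {α β γ δ PS : ℝ} {ω : Fin m → ℝ} {μ : Measure (Fin m → ℝ)}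
  {p q : (Fin m → ℝ) → Fin m → ℝ}

theorem IsPolicy.measurable_power (hp : IsPolicy PS p) : Measurable fun x => ∑ i, p x i :=
  Finset.measurable_sum _ fun i _ => (measurable_pi_apply i).comp hp.1

theorem IsPolicy.measurable_capacity (hp : IsPolicy PS p) :
    Measurable fun x => ∑ i, ω i * cnrCap α β γ δ (p x i) (x i) := by
  refine Finset.measurable_sum _ fun i _ => ?_
  have hpi : Measurable fun x => p x i := (measurable_pi_apply i).comp hp.1
  unfold cnrCap
  fun_prop

theorem IsPolicy.integrable_power [IsFiniteMeasure μ] (hp : IsPolicy PS p) :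
    Integrable (fun x => ∑ i, p x i) μ := by
  refine Integrable.of_bound hp.measurable_power.aestronglyMeasurable (∑ _i : Fin m, PS)
    (Eventually.of_forall fun x => ?_)
  rw [Real.norm_of_nonneg (Finset.sum_nonneg fun i _ => (hp.2 x i).1)]
  exact Finset.sum_le_sum fun i _ => (hp.2 x i).2

theorem IsPolicy.ae_capacity_mem_Icc (hα : 0 < α) (hβ : 0 < β) (hγ : 0 < γ) (hδ : 0 < δ)
    (hsupp : ∀ᵐ x ∂μ, ∀ i, 0 ≤ x i) (hω : ∀ i, 0 ≤ ω i) (hp : IsPolicy PS p) :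
    ∀ᵐ x ∂μ, ∑ i, ω i * cnrCap α β γ δ (p x i) (x i) ∈
      Set.Icc 0 (∑ i, ω i * Real.log (1 + α / β)) := by
  filter_upwards [hsupp] with x hx
  have hC := fun i => cnrCap_mem_Icc hα hβ hγ hδ (hp.2 x i).1 (hx i)
  exact ⟨Finset.sum_nonneg fun i _ => mul_nonneg (hω i) (hC i).1,
    Finset.sum_le_sum fun i _ => mul_le_mul_of_nonneg_left (hC i).2 (hω i)⟩

theorem IsPolicy.integrable_capacity [IsFiniteMeasure μ]
    (hα : 0 < α) (hβ : 0 < β) (hγ : 0 < γ) (hδ : 0 < δ)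
    (hsupp : ∀ᵐ x ∂μ, ∀ i, 0 ≤ x i) (hω : ∀ i, 0 ≤ ω i) (hp : IsPolicy PS p) :
    Integrable (fun x => ∑ i, ω i * cnrCap α β γ δ (p x i) (x i)) μ := by
  refine Integrable.of_bound hp.measurable_capacity.aestronglyMeasurable
    (∑ i, ω i * Real.log (1 + α / β))
    ((hp.ae_capacity_mem_Icc hα hβ hγ hδ hsupp hω).mono fun x hx => ?_)
  rw [Real.norm_of_nonneg hx.1]
  exact hx.2

theorem IsPolicy.objF_le [IsProbabilityMeasure μ]
    (hα : 0 < α) (hβ : 0 < β) (hγ : 0 < γ) (hδ : 0 < δ)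
    (hsupp : ∀ᵐ x ∂μ, ∀ i, 0 ≤ x i) (hω : ∀ i, 0 ≤ ω i) (hp : IsPolicy PS p) :
    objF α β γ δ ω μ p ≤ ∑ i, ω i * Real.log (1 + α / β) := by
  have h := integral_mono_ae (hp.integrable_capacity hα hβ hγ hδ hsupp hω)
    (integrable_const (∑ i, ω i * Real.log (1 + α / β)))
    ((hp.ae_capacity_mem_Icc hα hβ hγ hδ hsupp hω).mono fun x hx => hx.2)
  simpa [objF] using h

theorem IsPolicy.totPow_nonneg (hp : IsPolicy PS p) : 0 ≤ totPow μ p :=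
  integral_nonneg fun x => Finset.sum_nonneg fun i _ => (hp.2 x i).1

open Classical in
theorem IsPolicy.piecewise (hp : IsPolicy PS p) (hq : IsPolicy PS q) {E : Set (Fin m → ℝ)}
    (hE : MeasurableSet E) : IsPolicy PS (E.piecewise p q) := by
  refine ⟨Measurable.piecewise hE hp.1 hq.1, fun x i => ?_⟩
  by_cases hx : x ∈ E
  · simpa [hx] using hp.2 x i
  · simpa [hx] using hq.2 x i

open Classical in
theorem integral_piecewise_eq_setIntegral_sub_add {Ω : Type*} [MeasurableSpace Ω] {μ : Measure Ω}
    {f g : Ω → ℝ} (hf : Integrable f μ) (hg : Integrable g μ) {E : Set Ω} (hE : MeasurableSet E) :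
    ∫ x, E.piecewise f g x ∂μ = ∫ x in E, (f x - g x) ∂μ + ∫ x, g x ∂μ := by
  rw [integral_piecewise hE hf.integrableOn hg.integrableOn,
    integral_sub hf.integrableOn hg.integrableOn, ← integral_add_compl hE hg]
  ring

/-- Time sharing between two policies is realised, up to `ε`, by splicing them along a set. -/
theorem IsPolicy.exists_approx_mix [IsProbabilityMeasure μ] [NullSingletonClass μ]
    (hα : 0 < α) (hβ : 0 < β) (hγ : 0 < γ) (hδ : 0 < δ)
    (hsupp : ∀ᵐ x ∂μ, ∀ i, 0 ≤ x i) (hω : ∀ i, 0 ≤ ω i)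
    (hp : IsPolicy PS p) (hq : IsPolicy PS q) {θ ε : ℝ} (hθ : θ ∈ Set.Ioo (0 : ℝ) 1)
    (hε : 0 < ε) :
    ∃ r, IsPolicy PS r ∧
      |objF α β γ δ ω μ r - (θ * objF α β γ δ ω μ p + (1 - θ) * objF α β γ δ ω μ q)| ≤ ε ∧
      |totPow μ r - (θ * totPow μ p + (1 - θ) * totPow μ q)| ≤ ε := by
  classical
  have hCp := hp.integrable_capacity hα hβ hγ hδ hsupp hω
  have hCq := hq.integrable_capacity hα hβ hγ hδ hsupp hω
  have hTp := hp.integrable_power (μ := μ)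
  have hTq := hq.integrable_power (μ := μ)
  obtain ⟨E, hE, hF, hT⟩ := exists_measurableSet_abs_setIntegral_sub_le μ
    (hp.measurable_capacity.sub hq.measurable_capacity)
    (hp.measurable_power.sub hq.measurable_power) (hCp.sub hCq) (hTp.sub hTq) hθ hε
  simp only [Pi.sub_apply] at hF hT
  rw [integral_sub hCp hCq] at hF
  rw [integral_sub hTp hTq] at hT
  refine ⟨E.piecewise p q, hp.piecewise hq hE, ?_, ?_⟩
  · have hobj : objF α β γ δ ω μ (E.piecewise p q) = _ :=
      (integral_congr_ae (Eventually.of_forall fun x => by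
        by_cases hx : x ∈ E <;> simp [hx])).trans
        (integral_piecewise_eq_setIntegral_sub_add hCp hCq hE)
    rw [hobj]
    refine le_of_eq_of_le (congrArg _ ?_) hF
    simp only [objF]
    ring
  · have hpow : totPow μ (E.piecewise p q) = _ :=
      (integral_congr_ae (Eventually.of_forall fun x => by
        by_cases hx : x ∈ E <;> simp [hx])).trans
        (integral_piecewise_eq_setIntegral_sub_add hTp hTq hE)
    rw [hpow]
    refine le_of_eq_of_le (congrArg _ ?_) hT
    simp only [totPow]
    ring

end Policy

/-- **Theorem 1 (null duality gap).** Under Slater's condition and atomlessness of the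
channel-state distribution, the primal value equals the dual value: `𝕡 = 𝕕`. -/
theorem null_duality_gap {m : ℕ} (hm : 1 ≤ m)
    (α β γ δ : ℝ) (hα : 0 < α) (hβ : 0 < β) (hγ : 0 < γ) (hδ : 0 < δ)
    (μ : Measure (Fin m → ℝ)) [IsProbabilityMeasure μ]
    (hsupp : ∀ᵐ x ∂μ, ∀ i, 0 ≤ x i)
    (ω : Fin m → ℝ) (hω : ∀ i, 0 ≤ ω i)
    (PT PS : ℝ) (hPT : 0 < PT) (hPS : 0 < PS)
    (hslater : ∃ p₀, IsPolicy PS p₀ ∧ totPow μ p₀ < PT)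
    (hatoms : ∀ x : Fin m → ℝ, μ {x} = 0) :
    primalVal α β γ δ ω μ PT PS = dualVal α β γ δ ω μ PT PS := by
  have : NullSingletonClass μ := ⟨hatoms⟩
  obtain ⟨p₀, hp₀, hp₀T⟩ := hslater
  have hbddP : BddAbove {y | ∃ p, IsPolicy PS p ∧ totPow μ p ≤ PT ∧ y = objF α β γ δ ω μ p} :=
    ⟨_, by
      rintro y ⟨p, hp, -, rfl⟩
      exact hp.objF_le hα hβ hγ hδ hsupp hω⟩
  have hweak : ∀ lam ≥ (0 : ℝ),
      primalVal α β γ δ ω μ PT PS ≤ dualFun α β γ δ ω μ PT PS lam := by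
    intro lam hlam
    refine csSup_le ⟨_, p₀, hp₀, hp₀T.le, rfl⟩ ?_
    rintro y ⟨p, hp, hpT, rfl⟩
    refine le_csSup_of_le ⟨∑ i, ω i * Real.log (1 + α / β) + lam * PT, ?_⟩ ⟨p, hp, rfl⟩ ?_
    · rintro y ⟨q, hq, rfl⟩
      have h1 := hq.objF_le hα hβ hγ hδ hsupp hω
      have h2 := mul_nonneg hlam (hq.totPow_nonneg (μ := μ))
      simp only [Lagr]
      linarith
    · simp only [Lagr]
      linarith [mul_nonneg hlam (sub_nonneg.2 hpT)]
  refine le_antisymm (le_csInf ⟨_, 0, le_rfl, rfl⟩ ?_) ?_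
  · rintro y ⟨lam, hlam, rfl⟩
    exact hweak lam hlam
  · obtain ⟨lam, hlam, hle⟩ := exists_multiplier_of_approx_convex
      (P := {p : (Fin m → ℝ) → Fin m → ℝ // IsPolicy PS p})
      (F := fun p => objF α β γ δ ω μ p.1) (T := fun p => totPow μ p.1) (c := PT)
      (V := primalVal α β γ δ ω μ PT PS)
      (fun p hp => le_csSup hbddP ⟨p.1, p.2, hp, rfl⟩) ⟨⟨p₀, hp₀⟩, hp₀T⟩
      (fun p q θ hθ ε hε => by
        obtain ⟨r, hr, h⟩ := p.2.exists_approx_mix hα hβ hγ hδ hsupp hω q.2 hθ hε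
        exact ⟨⟨r, hr⟩, h⟩)
    refine csInf_le_of_le (b := dualFun α β γ δ ω μ PT PS lam)
      ⟨primalVal α β γ δ ω μ PT PS, ?_⟩ ⟨lam, hlam, rfl⟩ (csSup_le ⟨_, p₀, hp₀, rfl⟩ ?_)
    · rintro y ⟨lam', hlam', rfl⟩
      exact hweak lam' hlam'
    · rintro y ⟨p, hp, rfl⟩
      exact hle ⟨p, hp⟩
end

section
/- Pointwise evaluation of the dual function. Under the primal–dual setup, for every λ ≥ 0 the supremum of the Lagrangian over measurable policies is attained by pointwise maximization: D(λ) = λ·P_T + ∫ ( sup_{q ∈ [0,P_S]^m} ∑_{i=1}^m ( ω_i C(q_i, x_i) − λ q_i ) ) dμ(x); in particular the map x ↦ sup_{q ∈ [0,P_S]^m} ∑_i (ω_i C(q_i, x_i) − λ q_i) is measurable and μ-integrable, and there exists a measurable policy attaining the supremum defining D(λ). -/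
open MeasureTheory Real Filter

noncomputable section

/-- Pointwise maximized Lagrangian integrand:
`x ↦ sup_{q ∈ [0,P_S]^m} ∑ᵢ (ωᵢ C(qᵢ, xᵢ) − λ qᵢ)`. -/
def innerSup {m : ℕ} (α β γ δ : ℝ) (ω : Fin m → ℝ) (PS lam : ℝ)
    (x : Fin m → ℝ) : ℝ :=
  sSup {y | ∃ q : Fin m → ℝ, (∀ i, q i ∈ Set.Icc (0 : ℝ) PS) ∧
    y = ∑ i, (ω i * cnrCap α β γ δ (q i) (x i) - lam * q i)}

end

/-- A set of reals and a dense subset of it have the same supremum, bounded or not. -/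
lemma Real.sSup_eq_of_subset_closure {s t : Set ℝ} (hst : s ⊆ t) (hts : t ⊆ closure s) :
    sSup t = sSup s := by
  by_cases hs : BddAbove s
  · rcases s.eq_empty_or_nonempty with rfl | hne
    · simp_all
    · refine le_antisymm (csSup_le (hne.mono hst) fun y hy ↦ ?_)
        (csSup_le_csSup (hs.closure.mono hts) hne hst)
      exact closure_minimal (fun z hz ↦ le_csSup hs hz) isClosed_Iic (hts hy)
  · rw [Real.sSup_of_not_bddAbove hs, Real.sSup_of_not_bddAbove fun h ↦ hs (h.mono hst)]

/-- A jointly continuous family of functions on a compact interval has a measurable maximizer. -/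
lemma exists_measurable_maximizer {f : ℝ → ℝ → ℝ} (hf : Continuous (Function.uncurry f))
    {a b : ℝ} (hab : a ≤ b) :
    ∃ s : ℝ → ℝ, Measurable s ∧
      ∀ h, s h ∈ Set.Icc a b ∧ ∀ q ∈ Set.Icc a b, f q h ≤ f (s h) h := by
  set A : ℝ → Set ℝ := fun h ↦ {q ∈ Set.Icc a b | ∀ r ∈ Set.Icc a b, f r h ≤ f q h} with hA
  have hclosed : IsClosed {z : ℝ × ℝ | ∀ r ∈ Set.Icc a b, f r z.2 ≤ f z.1 z.2} := by
    simp only [Set.ofPred_forall]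
    refine isClosed_biInter fun r _ ↦ isClosed_le ?_ ?_
    · exact hf.comp (continuous_const.prodMk continuous_snd)
    · exact hf
  have hcompact (h : ℝ) : IsCompact (A h) :=
    isCompact_Icc.inter_right (hclosed.preimage (continuous_id.prodMk continuous_const))
  have hne (h : ℝ) : (A h).Nonempty := by
    obtain ⟨q, hq, hmax⟩ := isCompact_Icc.exists_isMaxOn (Set.nonempty_Icc.2 hab)
      (hf.comp (continuous_id.prodMk (continuous_const (y := h)))).continuousOn
    exact ⟨q, hq, fun r hr ↦ hmax hr⟩
  have hmem (h : ℝ) : sSup (A h) ∈ A h := (hcompact h).sSup_mem (hne h)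
  refine ⟨fun h ↦ sSup (A h), measurable_of_Ici fun c ↦ ?_, fun h ↦ hmem h⟩
  have hpre : (fun h ↦ sSup (A h)) ⁻¹' Set.Ici c =
      Prod.snd '' {z : Set.Icc a b × ℝ | c ≤ z.1 ∧ ∀ r ∈ Set.Icc a b, f r z.2 ≤ f z.1 z.2} := by
    ext h
    constructor
    · intro hc
      exact ⟨(⟨sSup (A h), (hmem h).1⟩, h), ⟨hc, (hmem h).2⟩, rfl⟩
    · rintro ⟨⟨q, h⟩, ⟨hc, hq⟩, rfl⟩
      exact hc.trans (le_csSup (hcompact h).bddAbove ⟨q.2, hq⟩)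
  rw [hpre]
  refine (isClosedMap_snd_of_compactSpace _ ?_).measurableSet
  refine (isClosed_le continuous_const (continuous_subtype_val.comp continuous_fst)).inter ?_
  exact hclosed.preimage
    ((continuous_subtype_val.comp continuous_fst).prodMk continuous_snd)

section Capacity

variable {α β γ δ : ℝ}

lemma measurable_cnrCap {X : Type*} [MeasurableSpace X] {f g : X → ℝ} (hf : Measurable f)
    (hg : Measurable g) : Measurable fun x ↦ cnrCap α β γ δ (f x) (g x) := by
  unfold cnrCap
  fun_prop

lemma cnrCap_nonneg (hα : 0 < α) (hβ : 0 < β) (hγ : 0 < γ) (hδ : 0 < δ) {P h : ℝ}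
    (hP : 0 ≤ P) (hh : 0 ≤ h) : 0 ≤ cnrCap α β γ δ P h := by
  refine Real.log_nonneg (le_add_of_nonneg_right ?_)
  positivity

lemma cnrCap_le (hα : 0 < α) (hβ : 0 < β) (hγ : 0 < γ) (hδ : 0 < δ) {P h : ℝ}
    (hP : 0 ≤ P) (hh : 0 ≤ h) : cnrCap α β γ δ P h ≤ Real.log (1 + α / β) := by
  refine Real.log_le_log (by positivity) ?_
  gcongr 1 + ?_
  rw [div_le_div_iff₀ (by positivity) hβ]
  have : 0 ≤ α * (γ * (P * h) + δ) := by positivity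
  linarith

lemma continuous_cnrCap_clamp (hα : 0 < α) (hβ : 0 < β) (hγ : 0 < γ) (hδ : 0 < δ) :
    Continuous fun z : ℝ × ℝ ↦ cnrCap α β γ δ (max z.1 0) (max z.2 0) := by
  have hu (z : ℝ × ℝ) : 0 ≤ max z.1 0 * max z.2 0 := by positivity
  have hden (z : ℝ × ℝ) : 0 < β * (max z.1 0 * max z.2 0) ^ 2 +
      γ * (max z.1 0 * max z.2 0) + δ := by
    have := hu z
    positivity
  unfold cnrCap
  refine Continuous.log (continuous_const.add (Continuous.div (by fun_prop) (by fun_prop)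
    fun z ↦ (hden z).ne')) fun z ↦ ?_
  have := hden z
  positivity

/-- Values of the product `P * h` at which the capacity may fail to be continuous. -/
def cnrSingular (α β γ δ : ℝ) : Set ℝ :=
  {u | β * u ^ 2 + γ * u + δ = 0} ∪ {u | (α + β) * u ^ 2 + γ * u + δ = 0}

lemma countable_quadratic_roots {a b c : ℝ} (ha : a ≠ 0) :
    {u : ℝ | a * u ^ 2 + b * u + c = 0}.Countable := by
  have hp : Polynomial.C a * Polynomial.X ^ 2 + Polynomial.C b * Polynomial.X +
      Polynomial.C c ≠ 0 := fun h ↦ by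
    have := Polynomial.degree_quadratic (b := b) (c := c) ha
    rw [h] at this
    simp at this
  refine ((Polynomial.finite_setOfPred_isRoot hp).subset fun u hu ↦ ?_).countable
  simpa [Polynomial.IsRoot] using hu

lemma countable_cnrSingular (hα : 0 < α) (hβ : 0 < β) : (cnrSingular α β γ δ).Countable :=
  (countable_quadratic_roots hβ.ne').union (countable_quadratic_roots (by positivity))

lemma continuousAt_cnrCap {P h : ℝ} (hu : P * h ∉ cnrSingular α β γ δ) :
    ContinuousAt (fun q ↦ cnrCap α β γ δ q h) P := by
  simp only [cnrSingular, Set.mem_union, Set.mem_ofPred_eq, not_or] at hu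
  unfold cnrCap
  refine ContinuousAt.log (continuousAt_const.add (ContinuousAt.div (by fun_prop) (by fun_prop)
    hu.1)) fun h0 ↦ hu.2 ?_
  rw [← div_self hu.1, ← add_div, div_eq_zero_iff, or_iff_left hu.1] at h0
  linarith

/-- Candidate powers in `[0, PS]`: clamped rationals, and clamped singular powers. -/
noncomputable def candidate (α β γ δ PS : ℝ) : ℚ ⊕ cnrSingular α β γ δ → ℝ → ℝ
  | Sum.inl t, _ => max 0 (min PS t)
  | Sum.inr b, h => max 0 (min PS (b / h))

lemma measurable_candidate (PS : ℝ) (n : ℚ ⊕ cnrSingular α β γ δ) :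
    Measurable (candidate α β γ δ PS n) := by
  rcases n with t | b
  · exact measurable_const
  · exact measurable_const.max (measurable_const.min (measurable_const.div measurable_id))

lemma candidate_mem_Icc {PS : ℝ} (hPS : 0 ≤ PS) (n : ℚ ⊕ cnrSingular α β γ δ) (h : ℝ) :
    candidate α β γ δ PS n h ∈ Set.Icc 0 PS := by
  rcases n with t | b <;> simp [candidate, hPS]

lemma mem_closure_candidate (hδ : 0 < δ) {PS : ℝ} (w lam h : ℝ) {q : ℝ}
    (hq : q ∈ Set.Icc 0 PS) :
    w * cnrCap α β γ δ q h - lam * q ∈ closure (Set.range fun n ↦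
      w * cnrCap α β γ δ (candidate α β γ δ PS n h) h - lam * candidate α β γ δ PS n h) := by
  have hclamp : max 0 (min PS q) = q := by rw [min_eq_right hq.2, max_eq_right hq.1]
  by_cases hu : q * h ∈ cnrSingular α β γ δ
  · have hh : h ≠ 0 := by
      rintro rfl
      simp [cnrSingular, hδ.ne'] at hu
    refine subset_closure ⟨Sum.inr ⟨q * h, hu⟩, ?_⟩
    simp only [candidate, mul_div_cancel_right₀ _ hh, hclamp]
  · have hcont : ContinuousAt (fun t : ℝ ↦ w * cnrCap α β γ δ (max 0 (min PS t)) h -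
        lam * max 0 (min PS t)) q := by
      have hc : ContinuousAt (fun t : ℝ ↦ max 0 (min PS t)) q := by fun_prop
      have hcap : ContinuousAt (fun t : ℝ ↦ cnrCap α β γ δ (max 0 (min PS t)) h) q :=
        ContinuousAt.comp (g := fun q ↦ cnrCap α β γ δ q h) (f := fun t ↦ max 0 (min PS t))
          (by rw [hclamp]; exact continuousAt_cnrCap hu) hc
      exact (continuousAt_const.mul hcap).sub (continuousAt_const.mul hc)
    have hmem := mem_closure_image hcont (Rat.denseRange_cast (𝕜 := ℝ) q)
    simp only [hclamp] at hmem
    refine closure_mono ?_ hmem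
    rintro _ ⟨_, ⟨t, rfl⟩, rfl⟩
    exact ⟨Sum.inl t, rfl⟩

end Capacity

section Dual

variable {m : ℕ} {α β γ δ : ℝ}

lemma innerSup_eq_iSup_candidate (hδ : 0 < δ) (ω : Fin m → ℝ) {PS : ℝ} (hPS : 0 ≤ PS)
    (lam : ℝ) (x : Fin m → ℝ) :
    innerSup α β γ δ ω PS lam x = ⨆ n : Fin m → ℚ ⊕ cnrSingular α β γ δ,
      ∑ i, (ω i * cnrCap α β γ δ (candidate α β γ δ PS (n i) (x i)) (x i) -
        lam * candidate α β γ δ PS (n i) (x i)) := by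
  refine Real.sSup_eq_of_subset_closure ?_ ?_
  · rintro _ ⟨n, rfl⟩
    exact ⟨fun i ↦ candidate α β γ δ PS (n i) (x i), fun i ↦ candidate_mem_Icc hPS _ _, rfl⟩
  · rintro _ ⟨q, hq, rfl⟩
    have hpi := mem_closure_pi (I := Set.univ) |>.2 fun i _ ↦
      mem_closure_candidate (α := α) (β := β) (γ := γ) hδ (ω i) lam (x i) (hq i)
    refine map_mem_closure (f := fun y : Fin m → ℝ ↦ ∑ i, y i) (by fun_prop) hpi fun y hy ↦ ?_
    choose n hn using fun i ↦ hy i (Set.mem_univ i)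
    exact ⟨n, Finset.sum_congr rfl fun i _ ↦ hn i⟩

lemma measurable_innerSup (hα : 0 < α) (hβ : 0 < β) (hδ : 0 < δ) (ω : Fin m → ℝ) {PS : ℝ}
    (hPS : 0 ≤ PS) (lam : ℝ) : Measurable (innerSup α β γ δ ω PS lam) := by
  have := (countable_cnrSingular (γ := γ) (δ := δ) hα hβ).to_subtype
  rw [funext (innerSup_eq_iSup_candidate hδ ω hPS lam)]
  refine Measurable.iSup fun n ↦ Finset.measurable_sum _ fun i _ ↦ ?_
  have hc : Measurable fun x : Fin m → ℝ ↦ candidate α β γ δ PS (n i) (x i) :=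
    (measurable_candidate PS (n i)).comp (measurable_pi_apply i)
  exact ((measurable_cnrCap hc (measurable_pi_apply i)).const_mul _).sub (hc.const_mul _)

/-- A policy that maximizes the Lagrangian integrand at every nonnegative channel state. -/
lemma exists_pointwise_optimal_policy (hα : 0 < α) (hβ : 0 < β) (hγ : 0 < γ) (hδ : 0 < δ)
    (ω : Fin m → ℝ) {PS : ℝ} (hPS : 0 ≤ PS) (lam : ℝ) :
    ∃ p : (Fin m → ℝ) → Fin m → ℝ, IsPolicy PS p ∧
      ∀ x, (∀ i, 0 ≤ x i) → ∀ q : Fin m → ℝ, (∀ i, q i ∈ Set.Icc 0 PS) →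
        ∑ i, (ω i * cnrCap α β γ δ (q i) (x i) - lam * q i) ≤
          ∑ i, (ω i * cnrCap α β γ δ (p x i) (x i) - lam * p x i) := by
  choose s hs hmax using fun i ↦ exists_measurable_maximizer
    (f := fun q h ↦ ω i * cnrCap α β γ δ (max q 0) (max h 0) - lam * q)
    (((continuous_cnrCap_clamp hα hβ hγ hδ).const_mul (ω i)).sub
      (continuous_fst.const_mul lam)) hPS
  refine ⟨fun x i ↦ s i (x i), ⟨measurable_pi_lambda _ fun i ↦
    (hs i).comp (measurable_pi_apply i), fun x i ↦ (hmax i (x i)).1⟩, fun x hx q hq ↦ ?_⟩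
  refine Finset.sum_le_sum fun i _ ↦ ?_
  have h := (hmax i (x i)).2 (q i) (hq i)
  simpa only [max_eq_left (hx i), max_eq_left (hq i).1, max_eq_left (hmax i (x i)).1.1] using h

variable {μ : Measure (Fin m → ℝ)} [IsProbabilityMeasure μ]

lemma integrable_cnrCap_policy (hα : 0 < α) (hβ : 0 < β) (hγ : 0 < γ) (hδ : 0 < δ)
    (hsupp : ∀ᵐ x ∂μ, ∀ i, 0 ≤ x i) {PS : ℝ} {p : (Fin m → ℝ) → Fin m → ℝ}
    (hp : IsPolicy PS p) (i : Fin m) :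
    Integrable (fun x ↦ cnrCap α β γ δ (p x i) (x i)) μ := by
  refine Integrable.of_bound (measurable_cnrCap ((measurable_pi_apply i).comp hp.1)
    (measurable_pi_apply i)).aestronglyMeasurable (Real.log (1 + α / β)) ?_
  filter_upwards [hsupp] with x hx
  rw [Real.norm_of_nonneg (cnrCap_nonneg hα hβ hγ hδ (hp.2 x i).1 (hx i))]
  exact cnrCap_le hα hβ hγ hδ (hp.2 x i).1 (hx i)

lemma integrable_policy {PS : ℝ} {p : (Fin m → ℝ) → Fin m → ℝ} (hp : IsPolicy PS p)
    (i : Fin m) : Integrable (fun x ↦ p x i) μ := by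
  refine Integrable.of_bound ((measurable_pi_apply i).comp hp.1).aestronglyMeasurable PS
    (ae_of_all _ fun x ↦ ?_)
  rw [Real.norm_of_nonneg (hp.2 x i).1]
  exact (hp.2 x i).2

lemma integrable_lagrangian_integrand (hα : 0 < α) (hβ : 0 < β) (hγ : 0 < γ) (hδ : 0 < δ)
    (hsupp : ∀ᵐ x ∂μ, ∀ i, 0 ≤ x i) (ω : Fin m → ℝ) {PS : ℝ} (lam : ℝ)
    {p : (Fin m → ℝ) → Fin m → ℝ} (hp : IsPolicy PS p) :
    Integrable (fun x ↦ ∑ i, (ω i * cnrCap α β γ δ (p x i) (x i) - lam * p x i)) μ :=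
  integrable_finsetSum _ fun i _ ↦
    ((integrable_cnrCap_policy hα hβ hγ hδ hsupp hp i).const_mul _).sub
      ((integrable_policy hp i).const_mul _)

lemma Lagr_eq_add_integral (hα : 0 < α) (hβ : 0 < β) (hγ : 0 < γ) (hδ : 0 < δ)
    (hsupp : ∀ᵐ x ∂μ, ∀ i, 0 ≤ x i) (ω : Fin m → ℝ) (PT : ℝ) {PS : ℝ} (lam : ℝ)
    {p : (Fin m → ℝ) → Fin m → ℝ} (hp : IsPolicy PS p) :
    Lagr α β γ δ ω μ PT p lam = lam * PT +
      ∫ x, ∑ i, (ω i * cnrCap α β γ δ (p x i) (x i) - lam * p x i) ∂μ := by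
  have hF : Integrable (fun x ↦ ∑ i, ω i * cnrCap α β γ δ (p x i) (x i)) μ :=
    integrable_finsetSum _ fun i _ ↦
      (integrable_cnrCap_policy hα hβ hγ hδ hsupp hp i).const_mul _
  have hP : Integrable (fun x ↦ ∑ i, p x i) μ :=
    integrable_finsetSum _ fun i _ ↦ integrable_policy hp i
  simp only [Finset.sum_sub_distrib, ← Finset.mul_sum]
  rw [integral_sub hF (hP.const_mul lam), integral_const_mul, Lagr, objF, totPow]
  ring

end Dual

/-- **Pointwise evaluation of the dual function.** For every `λ ≥ 0`,
`D(λ) = λ P_T + ∫ sup_{q ∈ [0,P_S]^m} ∑ᵢ (ωᵢ C(qᵢ, xᵢ) − λ qᵢ) dμ(x)`;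
the pointwise supremum is measurable and integrable, and the supremum defining
`D(λ)` is attained by some measurable policy. -/
theorem dual_pointwise_evaluation {m : ℕ} (hm : 1 ≤ m)
    (α β γ δ : ℝ) (hα : 0 < α) (hβ : 0 < β) (hγ : 0 < γ) (hδ : 0 < δ)
    (μ : Measure (Fin m → ℝ)) [IsProbabilityMeasure μ]
    (hsupp : ∀ᵐ x ∂μ, ∀ i, 0 ≤ x i)
    (ω : Fin m → ℝ) (hω : ∀ i, 0 ≤ ω i)
    (PT PS : ℝ) (hPT : 0 < PT) (hPS : 0 < PS)
    (lam : ℝ) (hlam : 0 ≤ lam) :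
    Measurable (innerSup α β γ δ ω PS lam) ∧
    Integrable (innerSup α β γ δ ω PS lam) μ ∧
    dualFun α β γ δ ω μ PT PS lam
      = lam * PT + ∫ x, innerSup α β γ δ ω PS lam x ∂μ ∧
    ∃ p, IsPolicy PS p ∧
      Lagr α β γ δ ω μ PT p lam = dualFun α β γ δ ω μ PT PS lam := by
  obtain ⟨p, hp, hopt⟩ := exists_pointwise_optimal_policy hα hβ hγ hδ ω hPS.le lam
  have hgreatest (x : Fin m → ℝ) (hx : ∀ i, 0 ≤ x i) :
      IsGreatest {y | ∃ q : Fin m → ℝ, (∀ i, q i ∈ Set.Icc (0 : ℝ) PS) ∧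
        y = ∑ i, (ω i * cnrCap α β γ δ (q i) (x i) - lam * q i)}
      (∑ i, (ω i * cnrCap α β γ δ (p x i) (x i) - lam * p x i)) :=
    ⟨⟨p x, hp.2 x, rfl⟩, by rintro _ ⟨q, hq, rfl⟩; exact hopt x hx q hq⟩
  have hae : (fun x ↦ ∑ i, (ω i * cnrCap α β γ δ (p x i) (x i) - lam * p x i)) =ᵐ[μ]
      innerSup α β γ δ ω PS lam := by
    filter_upwards [hsupp] with x hx
    exact (hgreatest x hx).csSup_eq.symm
  have hint := integrable_lagrangian_integrand hα hβ hγ hδ hsupp ω lam hp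
  have hLp := Lagr_eq_add_integral hα hβ hγ hδ hsupp ω PT lam hp
  have hdual : dualFun α β γ δ ω μ PT PS lam = Lagr α β γ δ ω μ PT p lam := by
    refine IsGreatest.csSup_eq ⟨⟨p, hp, rfl⟩, ?_⟩
    rintro _ ⟨r, hr, rfl⟩
    rw [hLp, Lagr_eq_add_integral hα hβ hγ hδ hsupp ω PT lam hr]
    gcongr 1
    refine integral_mono_ae
      (integrable_lagrangian_integrand hα hβ hγ hδ hsupp ω lam hr) hint ?_
    filter_upwards [hsupp] with x hx
    exact hopt x hx (r x) (hr.2 x)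
  refine ⟨measurable_innerSup hα hβ hδ ω hPS.le lam, hint.congr hae, ?_, p, hp, hdual.symm⟩
  rw [hdual, hLp, integral_congr_ae hae]
end
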